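/- arXiv:1910.03429 — 2 statements merged into one kernel-verified Lean document; each statement's English description precedes it below -/
import Mathlib

section
/- Let C ⊆ ℝ² be a closed planar sector (cone) with vertex at the origin and opening angle α ∈ (0, 2π), and let x ∈ ∂C with x ≠ 0. Then the fractional curvature H_s(x, C), defined as a principal value, satisfies H_s(x,C) ≤ 0 if and only if α ≥ π, and H_s(x,C) = 0 if and only if α = π. -/
open MeasureTheory Set Filter Topology Real

/-- Principal-value fractional curvature in the plane:
`fracCurvPV s E x h` means `H_s(x,E) = h` where
`H_s(x,E) = p.v. ∫ (χ_{Eᶜ}(y) - χ_E(y)) |x-y|^{-(2+s)} dy`. -/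
noncomputable def fracCurvPV (s : ℝ) (E : Set (EuclideanSpace ℝ (Fin 2)))
    (x : EuclideanSpace ℝ (Fin 2)) (h : ℝ) : Prop :=
  Tendsto (fun ε : ℝ => ∫ y in {y | ε ≤ dist x y},
      (Set.indicator Eᶜ (fun _ => (1 : ℝ)) y - Set.indicator E (fun _ => (1 : ℝ)) y)
        * dist x y ^ (-(2 + s)))
    (𝓝[>] (0 : ℝ)) (𝓝 h)

/-- The closed planar sector with vertex `0`, initial angle `θ₀` and opening angle `α`. -/
def sector (θ₀ α : ℝ) : Set (EuclideanSpace ℝ (Fin 2)) :=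
  {p | ∃ r θ : ℝ, 0 ≤ r ∧ θ ∈ Set.Icc θ₀ (θ₀ + α) ∧
    p 0 = r * Real.cos θ ∧ p 1 = r * Real.sin θ}

/-- The kernel `|x - y|^{-r}`, `r > 2`, is integrable away from its singularity in the plane. -/
lemma integrableOn_dist_rpow_neg {r : ℝ} (hr : 2 < r) (x : EuclideanSpace ℝ (Fin 2)) {ε : ℝ}
    (hε : 0 < ε) :
    IntegrableOn (fun y => dist x y ^ (-r)) {y | ε ≤ dist x y} := by
  have hint : Integrable (fun y : EuclideanSpace ℝ (Fin 2) => (1 + ‖y - x‖) ^ (-r)) := by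
    have h := integrable_one_add_norm (E := EuclideanSpace ℝ (Fin 2)) (μ := volume) (r := r)
      (by simpa using hr)
    exact h.comp_sub_right x
  have hmeas : MeasurableSet {y : EuclideanSpace ℝ (Fin 2) | ε ≤ dist x y} :=
    measurableSet_le measurable_const (by fun_prop)
  refine Integrable.mono' ((hint.const_mul ((ε / (1 + ε)) ^ (-r))).integrableOn)
    (by fun_prop : Measurable fun y : EuclideanSpace ℝ (Fin 2) =>
      dist x y ^ (-r)).aestronglyMeasurable ?_
  filter_upwards [ae_restrict_mem hmeas] with y hy
  have hy : ε ≤ dist x y := hy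
  rw [Real.norm_of_nonneg (Real.rpow_nonneg dist_nonneg _), ← dist_eq_norm, dist_comm y x,
    ← Real.mul_rpow (by positivity) (by positivity)]
  refine Real.rpow_le_rpow_of_nonpos (by positivity) ?_ (by linarith)
  rw [div_mul_eq_mul_div, div_le_iff₀ (by positivity)]
  linarith

/-- Symmetrising a truncated integral under the point reflection in `x`. -/
lemma two_mul_setIntegral_eq_reflect {r : ℝ} (hr : 2 < r) (x : EuclideanSpace ℝ (Fin 2)) {ε : ℝ}
    (hε : 0 < ε) {g : EuclideanSpace ℝ (Fin 2) → ℝ} (hg : Measurable g) (hb : ∀ y, |g y| ≤ 1) :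
    IntegrableOn (fun y => (g y + g (2 • x - y)) * dist x y ^ (-r)) {y | ε ≤ dist x y} ∧
    2 * ∫ y in {y | ε ≤ dist x y}, g y * dist x y ^ (-r) =
      ∫ y in {y | ε ≤ dist x y}, (g y + g (2 • x - y)) * dist x y ^ (-r) := by
  have hk := integrableOn_dist_rpow_neg hr x hε
  have hmeas : MeasurableSet {y : EuclideanSpace ℝ (Fin 2) | ε ≤ dist x y} :=
    measurableSet_le measurable_const (by fun_prop)
  have hdist : ∀ y, dist x (2 • x - y) = dist x y := fun y => by
    rw [dist_eq_norm, dist_eq_norm, ← norm_neg]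
    congr 1
    rw [two_smul]
    abel
  have h1 : IntegrableOn (fun y => g y * dist x y ^ (-r)) {y | ε ≤ dist x y} :=
    hk.bdd_mul hg.aestronglyMeasurable (c := 1) (ae_of_all _ hb)
  have h2 : IntegrableOn (fun y => g (2 • x - y) * dist x y ^ (-r)) {y | ε ≤ dist x y} :=
    hk.bdd_mul (hg.comp (by fun_prop)).aestronglyMeasurable (c := 1) (ae_of_all _ fun y => hb _)
  have hrefl : ∫ y in {y | ε ≤ dist x y}, g (2 • x - y) * dist x y ^ (-r) =
      ∫ y in {y | ε ≤ dist x y}, g y * dist x y ^ (-r) := by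
    rw [← integral_indicator hmeas, ← integral_indicator hmeas,
      ← integral_sub_left_eq_self _ volume (2 • x)]
    congr 1
    ext y
    simp only [Set.indicator, Set.mem_ofPred_eq, hdist, sub_sub_cancel]
  simp only [add_mul]
  refine ⟨h1.add h2, ?_⟩
  rw [integral_add h1 h2, hrefl, two_mul]

/-- A principal value is nonnegative if its density has nonnegative symmetrisation. -/
lemma pv_nonneg_of_reflect {r : ℝ} (hr : 2 < r) (x : EuclideanSpace ℝ (Fin 2))
    {g : EuclideanSpace ℝ (Fin 2) → ℝ} (hg : Measurable g) (hb : ∀ y, |g y| ≤ 1)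
    (hpos : ∀ᵐ y, 0 ≤ g y + g (2 • x - y)) {h : ℝ}
    (hlim : Tendsto (fun ε : ℝ => ∫ y in {y | ε ≤ dist x y}, g y * dist x y ^ (-r))
      (𝓝[>] (0 : ℝ)) (𝓝 h)) :
    0 ≤ h := by
  refine ge_of_tendsto hlim ?_
  filter_upwards [self_mem_nhdsWithin] with ε hε
  have key := (two_mul_setIntegral_eq_reflect hr x hε hg hb).2
  have : 0 ≤ ∫ y in {y | ε ≤ dist x y}, (g y + g (2 • x - y)) * dist x y ^ (-r) := by
    refine integral_nonneg_of_ae (ae_restrict_of_ae ?_)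
    filter_upwards [hpos] with y hy
    exact mul_nonneg hy (Real.rpow_nonneg dist_nonneg _)
  linarith

/-- A principal value is positive if its density has nonnegative symmetrisation which is positive
on a nonempty open set. -/
lemma pv_pos_of_reflect {r : ℝ} (hr : 2 < r) (x : EuclideanSpace ℝ (Fin 2))
    {g : EuclideanSpace ℝ (Fin 2) → ℝ} (hg : Measurable g) (hb : ∀ y, |g y| ≤ 1)
    (hpos : ∀ᵐ y, 0 ≤ g y + g (2 • x - y)) {U : Set (EuclideanSpace ℝ (Fin 2))} (hU : IsOpen U)
    (hUne : U.Nonempty) (hUpos : ∀ y ∈ U, 0 < g y + g (2 • x - y)) {h : ℝ}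
    (hlim : Tendsto (fun ε : ℝ => ∫ y in {y | ε ≤ dist x y}, g y * dist x y ^ (-r))
      (𝓝[>] (0 : ℝ)) (𝓝 h)) :
    0 < h := by
  obtain ⟨z, hzU, hzx⟩ : ∃ z ∈ U, z ≠ x := by
    obtain ⟨z, hz⟩ := (dense_compl_singleton x).inter_open_nonempty U hU hUne
    exact ⟨z, hz.1, hz.2⟩
  have hd : 0 < dist x z := dist_pos.2 hzx.symm
  set δ := dist x z / 2 with hδ
  have hδ0 : 0 < δ := half_pos hd
  have hnn : ∀ᵐ y, 0 ≤ (g y + g (2 • x - y)) * dist x y ^ (-r) := by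
    filter_upwards [hpos] with y hy
    exact mul_nonneg hy (Real.rpow_nonneg dist_nonneg _)
  have hδpos : 0 < ∫ y in {y | δ ≤ dist x y}, (g y + g (2 • x - y)) * dist x y ^ (-r) := by
    rw [setIntegral_pos_iff_support_of_nonneg_ae (ae_restrict_of_ae hnn)
      (two_mul_setIntegral_eq_reflect hr x hδ0 hg hb).1]
    have hopen : IsOpen (U ∩ {y | δ < dist x y}) :=
      hU.inter (isOpen_lt continuous_const (by fun_prop))
    refine (hopen.measure_pos volume ⟨z, hzU, half_lt_self hd⟩).trans_le (measure_mono ?_)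
    rintro y ⟨hyU, hy⟩
    have hy : δ < dist x y := hy
    exact ⟨(mul_pos (hUpos y hyU) (Real.rpow_pos_of_pos (hδ0.trans hy) _)).ne', hy.le⟩
  refine lt_of_lt_of_le (half_pos hδpos) (ge_of_tendsto hlim ?_)
  filter_upwards [Ioo_mem_nhdsGT hδ0] with ε hε
  obtain ⟨hint, key⟩ := two_mul_setIntegral_eq_reflect hr x hε.1 hg hb
  have hsub : {y | δ ≤ dist x y} ⊆ {y | ε ≤ dist x y} := fun y hy => hε.2.le.trans hy
  have hmono := setIntegral_mono_set hint (ae_restrict_of_ae hnn) hsub.eventuallyLE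
  linarith

/-- The signed distance to the line through `0` with direction `(cos θ, sin θ)`. -/
noncomputable def lineFunctional (θ : ℝ) : EuclideanSpace ℝ (Fin 2) →L[ℝ] ℝ :=
  Real.cos θ • EuclideanSpace.proj (𝕜 := ℝ) (1 : Fin 2) -
    Real.sin θ • EuclideanSpace.proj (𝕜 := ℝ) (0 : Fin 2)

lemma lineFunctional_apply (θ : ℝ) (p : EuclideanSpace ℝ (Fin 2)) :
    lineFunctional θ p = Real.cos θ * p 1 - Real.sin θ * p 0 := by
  simp [lineFunctional]

lemma lineFunctional_polar {p : EuclideanSpace ℝ (Fin 2)} {r φ : ℝ} (h0 : p 0 = r * Real.cos φ)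
    (h1 : p 1 = r * Real.sin φ) (θ : ℝ) : lineFunctional θ p = r * Real.sin (φ - θ) := by
  rw [lineFunctional_apply, h0, h1, Real.sin_sub]
  ring

lemma ae_lineFunctional_ne_zero (θ : ℝ) : ∀ᵐ y, lineFunctional θ y ≠ 0 := by
  have hne : LinearMap.ker (lineFunctional θ).toLinearMap ≠ ⊤ := by
    intro htop
    have h : (!₂[-Real.sin θ, Real.cos θ] : EuclideanSpace ℝ (Fin 2)) ∈
        LinearMap.ker (lineFunctional θ).toLinearMap := htop ▸ Submodule.mem_top
    have h' : lineFunctional θ !₂[-Real.sin θ, Real.cos θ] = 0 := h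
    rw [lineFunctional_apply] at h'
    simp only [Matrix.cons_val_zero, Matrix.cons_val_one] at h'
    nlinarith [Real.sin_sq_add_cos_sq θ]
  have h := Measure.addHaar_submodule (volume : Measure (EuclideanSpace ℝ (Fin 2))) _ hne
  rw [ae_iff]
  convert h using 2
  ext y
  simp

/-- Polar coordinates with angle in a prescribed period. -/
lemma exists_polar (θ₀ : ℝ) (p : EuclideanSpace ℝ (Fin 2)) :
    ∃ r φ : ℝ, 0 ≤ r ∧ φ ∈ Set.Ico 0 (2 * π) ∧ p 0 = r * Real.cos (θ₀ + φ) ∧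
      p 1 = r * Real.sin (θ₀ + φ) := by
  set z : ℂ := ⟨p 0, p 1⟩ with hz
  have hmem := toIcoMod_mem_Ico' Real.two_pi_pos (Complex.arg z - θ₀)
  obtain ⟨n, hn⟩ : ∃ n : ℤ, θ₀ + toIcoMod Real.two_pi_pos 0 (Complex.arg z - θ₀) =
      Complex.arg z - n * (2 * π) := by
    refine ⟨toIcoDiv Real.two_pi_pos 0 (Complex.arg z - θ₀), ?_⟩
    rw [toIcoMod, zsmul_eq_mul]
    ring
  refine ⟨‖z‖, _, norm_nonneg _, hmem, ?_, ?_⟩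
  · rw [hn, Real.cos_sub_int_mul_two_pi, Complex.norm_mul_cos_arg]
  · rw [hn, Real.sin_sub_int_mul_two_pi, Complex.norm_mul_sin_arg]

/-- A sector of opening `≤ π` is an intersection of two half-planes. -/
lemma sector_eq_inter {θ₀ α : ℝ} (h0 : 0 < α) (hα : α ≤ π) :
    sector θ₀ α = {p | 0 ≤ lineFunctional θ₀ p ∧ lineFunctional (θ₀ + α) p ≤ 0} := by
  ext p
  constructor
  · rintro ⟨r, θ, hr, ⟨h1, h2⟩, hp0, hp1⟩
    simp only [Set.mem_ofPred_eq, lineFunctional_polar hp0 hp1]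
    exact ⟨mul_nonneg hr (Real.sin_nonneg_of_nonneg_of_le_pi (by linarith) (by linarith)),
      mul_nonpos_of_nonneg_of_nonpos hr
        (Real.sin_nonpos_of_nonpos_of_neg_pi_le (by linarith) (by linarith))⟩
  · obtain ⟨r, φ, hr, ⟨hφ0, hφ1⟩, hp0, hp1⟩ := exists_polar θ₀ p
    simp only [Set.mem_ofPred_eq, lineFunctional_polar hp0 hp1]
    rintro ⟨ha, hb⟩
    rcases hr.eq_or_lt with rfl | hr
    · exact ⟨0, θ₀, le_rfl, ⟨le_rfl, by linarith⟩, by simpa using hp0, by simpa using hp1⟩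
    refine ⟨r, θ₀ + φ, hr.le, ⟨by linarith, ?_⟩, hp0, hp1⟩
    by_contra! hlt
    have hφα : α < φ := by linarith
    have ha := nonneg_of_mul_nonneg_right ha hr
    have hb : Real.sin (θ₀ + φ - (θ₀ + α)) ≤ 0 := by
      by_contra! hc
      exact absurd hb (not_le.2 (mul_pos hr hc))
    rw [add_sub_cancel_left] at ha
    rw [add_sub_add_left_eq_sub] at hb
    rcases le_or_gt φ π with hφ | hφ
    · exact absurd hb (not_le.2 (Real.sin_pos_of_pos_of_lt_pi (by linarith) (by linarith)))
    · have := Real.sin_neg_of_neg_of_neg_pi_lt (x := φ - 2 * π) (by linarith) (by linarith)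
      rw [Real.sin_sub_two_pi] at this
      linarith

/-- A sector of opening `≥ π` is a union of two half-planes. -/
lemma sector_eq_union {θ₀ α : ℝ} (hα : π ≤ α) (h2 : α < 2 * π) :
    sector θ₀ α = {p | 0 ≤ lineFunctional θ₀ p ∨ lineFunctional (θ₀ + α) p ≤ 0} := by
  have hpi := Real.pi_pos
  ext p
  constructor
  · rintro ⟨r, θ, hr, ⟨h1, h2⟩, hp0, hp1⟩
    simp only [Set.mem_ofPred_eq, lineFunctional_polar hp0 hp1]
    rcases le_or_gt (θ - θ₀) π with h | h
    · exact .inl (mul_nonneg hr (Real.sin_nonneg_of_nonneg_of_le_pi (by linarith) h))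
    · exact .inr (mul_nonpos_of_nonneg_of_nonpos hr
        (Real.sin_nonpos_of_nonpos_of_neg_pi_le (by linarith) (by linarith)))
  · obtain ⟨r, φ, hr, ⟨hφ0, hφ1⟩, hp0, hp1⟩ := exists_polar θ₀ p
    simp only [Set.mem_ofPred_eq, lineFunctional_polar hp0 hp1]
    intro hor
    rcases hr.eq_or_lt with rfl | hr
    · exact ⟨0, θ₀, le_rfl, ⟨le_rfl, by linarith⟩, by simpa using hp0, by simpa using hp1⟩
    refine ⟨r, θ₀ + φ, hr.le, ⟨by linarith, ?_⟩, hp0, hp1⟩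
    by_contra! hlt
    have hφα : α < φ := by linarith
    rw [add_sub_cancel_left, add_sub_add_left_eq_sub] at hor
    have ha := Real.sin_neg_of_neg_of_neg_pi_lt (x := φ - 2 * π) (by linarith) (by linarith)
    rw [Real.sin_sub_two_pi] at ha
    have hb := Real.sin_pos_of_pos_of_lt_pi (x := φ - α) (by linarith) (by linarith)
    rcases hor with h | h
    · exact absurd h (not_le.2 (mul_neg_of_pos_of_neg hr ha))
    · exact absurd h (not_le.2 (mul_pos hr hb))

/-- The difference of the unit directions bounding a sector. -/
lemma lineFunctional_chord (θ₀ α : ℝ) : ∃ y : EuclideanSpace ℝ (Fin 2),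
    lineFunctional θ₀ y = Real.sin α ∧ lineFunctional (θ₀ + α) y = Real.sin α := by
  refine ⟨!₂[Real.cos (θ₀ + α) - Real.cos θ₀, Real.sin (θ₀ + α) - Real.sin θ₀], ?_, ?_⟩
  all_goals
    rw [lineFunctional_apply]
    simp only [Matrix.cons_val_zero, Matrix.cons_val_one]
    have h : Real.sin α = Real.sin (θ₀ + α - θ₀) := by rw [add_sub_cancel_left]
    rw [h, Real.sin_sub]
    ring

lemma lineFunctional_reflect {θ : ℝ} {x : EuclideanSpace ℝ (Fin 2)} (hx : lineFunctional θ x = 0)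
    (y : EuclideanSpace ℝ (Fin 2)) : lineFunctional θ (2 • x - y) = -lineFunctional θ y := by
  rw [map_sub, map_nsmul, hx]
  simp

/-- The density `χ_{Eᶜ} - χ_E` of the fractional curvature. -/
noncomputable def signDensity (E : Set (EuclideanSpace ℝ (Fin 2)))
    (y : EuclideanSpace ℝ (Fin 2)) : ℝ :=
  Set.indicator Eᶜ (fun _ => (1 : ℝ)) y - Set.indicator E (fun _ => (1 : ℝ)) y

section signDensity

variable {E : Set (EuclideanSpace ℝ (Fin 2))} {y : EuclideanSpace ℝ (Fin 2)}

lemma signDensity_of_mem (hy : y ∈ E) : signDensity E y = -1 := by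
  simp [signDensity, hy]

lemma signDensity_of_notMem (hy : y ∉ E) : signDensity E y = 1 := by
  simp [signDensity, hy]

lemma abs_signDensity_le (y : EuclideanSpace ℝ (Fin 2)) : |signDensity E y| ≤ 1 := by
  by_cases hy : y ∈ E
  · simp [signDensity_of_mem hy]
  · simp [signDensity_of_notMem hy]

lemma neg_one_le_signDensity (y : EuclideanSpace ℝ (Fin 2)) : -1 ≤ signDensity E y :=
  (abs_le.1 (abs_signDensity_le y)).1

lemma signDensity_le_one (y : EuclideanSpace ℝ (Fin 2)) : signDensity E y ≤ 1 :=
  (abs_le.1 (abs_signDensity_le y)).2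

lemma measurable_signDensity (hE : MeasurableSet E) : Measurable (signDensity E) :=
  (measurable_const.indicator hE.compl).sub (measurable_const.indicator hE)

end signDensity

section sign

variable {s h : ℝ} {E : Set (EuclideanSpace ℝ (Fin 2))} {x : EuclideanSpace ℝ (Fin 2)}

lemma fracCurvPV.tendsto_neg (hpv : fracCurvPV s E x h) :
    Tendsto (fun ε : ℝ => ∫ y in {y | ε ≤ dist x y}, -signDensity E y * dist x y ^ (-(2 + s)))
      (𝓝[>] (0 : ℝ)) (𝓝 (-h)) := by
  simp only [neg_mul, integral_neg]
  exact Tendsto.neg hpv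

lemma signDensity_reflect_nonneg {y : EuclideanSpace ℝ (Fin 2)} (hy : y ∈ E → 2 • x - y ∉ E) :
    0 ≤ signDensity E y + signDensity E (2 • x - y) := by
  by_cases hyE : y ∈ E
  · simp [signDensity_of_mem hyE, signDensity_of_notMem (hy hyE)]
  · rw [signDensity_of_notMem hyE]
    linarith [neg_one_le_signDensity (E := E) (2 • x - y)]

lemma signDensity_reflect_nonpos {y : EuclideanSpace ℝ (Fin 2)} (hy : y ∉ E → 2 • x - y ∈ E) :
    0 ≤ -signDensity E y + -signDensity E (2 • x - y) := by
  by_cases hyE : y ∈ E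
  · rw [signDensity_of_mem hyE]
    linarith [signDensity_le_one (E := E) (2 • x - y)]
  · simp [signDensity_of_notMem hyE, signDensity_of_mem (hy hyE)]

/-- A set meeting its reflection in `x` in a null set has nonnegative curvature at `x`. -/
lemma fracCurvPV.nonneg (hpv : fracCurvPV s E x h) (hs : 0 < s) (hE : MeasurableSet E)
    (hrefl : ∀ᵐ y, y ∈ E → 2 • x - y ∉ E) : 0 ≤ h :=
  pv_nonneg_of_reflect (by linarith) x (measurable_signDensity hE) abs_signDensity_le
    (hrefl.mono fun _ => signDensity_reflect_nonneg) hpv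

/-- A set covering the plane, up to a null set, together with its reflection in `x` has
nonpositive curvature at `x`. -/
lemma fracCurvPV.nonpos (hpv : fracCurvPV s E x h) (hs : 0 < s) (hE : MeasurableSet E)
    (hrefl : ∀ᵐ y, y ∉ E → 2 • x - y ∈ E) : h ≤ 0 :=
  neg_nonneg.1 <| pv_nonneg_of_reflect (by linarith) x (measurable_signDensity hE).neg
    (fun y => (abs_neg _).trans_le (abs_signDensity_le y))
    (hrefl.mono fun _ => signDensity_reflect_nonpos) hpv.tendsto_neg

lemma fracCurvPV.pos (hpv : fracCurvPV s E x h) (hs : 0 < s) (hE : MeasurableSet E)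
    (hrefl : ∀ᵐ y, y ∈ E → 2 • x - y ∉ E) {U : Set (EuclideanSpace ℝ (Fin 2))} (hU : IsOpen U)
    (hUne : U.Nonempty) (hUE : ∀ y ∈ U, y ∉ E ∧ 2 • x - y ∉ E) : 0 < h := by
  refine pv_pos_of_reflect (by linarith) x (measurable_signDensity hE) abs_signDensity_le
    (hrefl.mono fun _ => signDensity_reflect_nonneg) hU hUne (fun y hy => ?_) hpv
  rw [signDensity_of_notMem (hUE y hy).1, signDensity_of_notMem (hUE y hy).2]
  norm_num

lemma fracCurvPV.neg (hpv : fracCurvPV s E x h) (hs : 0 < s) (hE : MeasurableSet E)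
    (hrefl : ∀ᵐ y, y ∉ E → 2 • x - y ∈ E) {U : Set (EuclideanSpace ℝ (Fin 2))} (hU : IsOpen U)
    (hUne : U.Nonempty) (hUE : ∀ y ∈ U, y ∈ E ∧ 2 • x - y ∈ E) : h < 0 := by
  refine neg_pos.1 <| pv_pos_of_reflect (by linarith) x (measurable_signDensity hE).neg
    (fun y => (abs_neg _).trans_le (abs_signDensity_le y))
    (hrefl.mono fun _ => signDensity_reflect_nonpos) hU hUne (fun y hy => ?_) hpv.tendsto_neg
  simp only [Pi.neg_apply]
  rw [signDensity_of_mem (hUE y hy).1, signDensity_of_mem (hUE y hy).2]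
  norm_num

end sign

section sector

variable {s h θ₀ α : ℝ} {x : EuclideanSpace ℝ (Fin 2)}

lemma isClosed_sector (h0 : 0 < α) (h2 : α < 2 * π) : IsClosed (sector θ₀ α) := by
  have ha : IsClosed {p | 0 ≤ lineFunctional θ₀ p} :=
    isClosed_le continuous_const (lineFunctional θ₀).continuous
  have hb : IsClosed {p | lineFunctional (θ₀ + α) p ≤ 0} :=
    isClosed_le (lineFunctional (θ₀ + α)).continuous continuous_const
  rcases le_total α π with hα | hα
  · rw [sector_eq_inter h0 hα]
    exact ha.inter hb
  · rw [sector_eq_union hα h2]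
    exact ha.union hb

/-- A boundary point of a sector lies on one of the two bounding lines. -/
lemma lineFunctional_eq_zero_of_mem_frontier (h0 : 0 < α) (h2 : α < 2 * π)
    (hx : x ∈ frontier (sector θ₀ α)) :
    lineFunctional θ₀ x = 0 ∨ lineFunctional (θ₀ + α) x = 0 := by
  rw [(isClosed_sector h0 h2).frontier_eq] at hx
  obtain ⟨hmem, hint⟩ := hx
  have ha : IsOpen {p | 0 < lineFunctional θ₀ p} :=
    isOpen_lt continuous_const (lineFunctional θ₀).continuous
  have hb : IsOpen {p | lineFunctional (θ₀ + α) p < 0} :=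
    isOpen_lt (lineFunctional (θ₀ + α)).continuous continuous_const
  by_contra! hne
  refine hint ?_
  rcases le_total α π with hα | hα
  · rw [sector_eq_inter h0 hα] at hmem ⊢
    refine mem_interior.2 ⟨_, fun p hp => ⟨le_of_lt hp.1, le_of_lt hp.2⟩, ha.inter hb, ?_⟩
    exact ⟨lt_of_le_of_ne hmem.1 hne.1.symm, lt_of_le_of_ne hmem.2 hne.2⟩
  · rw [sector_eq_union hα h2] at hmem ⊢
    refine mem_interior.2 ⟨_, fun p hp => Or.imp le_of_lt le_of_lt hp, ha.union hb, ?_⟩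
    exact (hmem.imp (fun h => lt_of_le_of_ne h hne.1.symm) fun h => lt_of_le_of_ne h hne.2)

lemma ae_reflect_notMem_sector (h0 : 0 < α) (hα : α ≤ π)
    (hx : lineFunctional θ₀ x = 0 ∨ lineFunctional (θ₀ + α) x = 0) :
    ∀ᵐ y, y ∈ sector θ₀ α → 2 • x - y ∉ sector θ₀ α := by
  rw [sector_eq_inter h0 hα]
  filter_upwards [ae_lineFunctional_ne_zero θ₀, ae_lineFunctional_ne_zero (θ₀ + α)]
    with y hya hyb hy hy'
  rcases hx with hx | hx
  · have h1 := hy'.1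
    rw [lineFunctional_reflect hx] at h1
    exact hya (le_antisymm (by linarith) hy.1)
  · have h1 := hy'.2
    rw [lineFunctional_reflect hx] at h1
    exact hyb (le_antisymm hy.2 (by linarith))

lemma reflect_mem_sector (hα : π ≤ α) (h2 : α < 2 * π)
    (hx : lineFunctional θ₀ x = 0 ∨ lineFunctional (θ₀ + α) x = 0)
    {y : EuclideanSpace ℝ (Fin 2)} (hy : y ∉ sector θ₀ α) : 2 • x - y ∈ sector θ₀ α := by
  rw [sector_eq_union hα h2] at hy ⊢
  simp only [Set.mem_ofPred_eq, not_or, not_le] at hy ⊢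
  rcases hx with hx | hx
  · left
    rw [lineFunctional_reflect hx]
    linarith
  · right
    rw [lineFunctional_reflect hx]
    linarith

lemma isOpen_lineFunctional_pos (θ₀ θ₁ : ℝ) :
    IsOpen {y | 0 < lineFunctional θ₀ y ∧ 0 < lineFunctional θ₁ y} :=
  (isOpen_lt continuous_const (lineFunctional θ₀).continuous).inter
    (isOpen_lt continuous_const (lineFunctional θ₁).continuous)

lemma isOpen_lineFunctional_neg (θ₀ θ₁ : ℝ) :
    IsOpen {y | lineFunctional θ₀ y < 0 ∧ lineFunctional θ₁ y < 0} :=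
  (isOpen_lt (lineFunctional θ₀).continuous continuous_const).inter
    (isOpen_lt (lineFunctional θ₁).continuous continuous_const)

lemma exists_isOpen_reflect_notMem_sector (h0 : 0 < α) (hα : α < π)
    (hx : lineFunctional θ₀ x = 0 ∨ lineFunctional (θ₀ + α) x = 0) :
    ∃ U : Set (EuclideanSpace ℝ (Fin 2)), IsOpen U ∧ U.Nonempty ∧
      ∀ y ∈ U, y ∉ sector θ₀ α ∧ 2 • x - y ∉ sector θ₀ α := by
  have hsin := Real.sin_pos_of_pos_of_lt_pi h0 hα
  obtain ⟨z, hz0, hz1⟩ := lineFunctional_chord θ₀ α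
  rw [sector_eq_inter h0 hα.le]
  rcases hx with hx | hx
  · refine ⟨_, isOpen_lineFunctional_pos θ₀ (θ₀ + α), ⟨z, hz0 ▸ hsin, hz1 ▸ hsin⟩, ?_⟩
    rintro y ⟨hy0, hy1⟩
    refine ⟨fun hy => absurd hy.2 (not_le.2 hy1), fun hy => ?_⟩
    have := hy.1
    rw [lineFunctional_reflect hx] at this
    linarith
  · refine ⟨_, isOpen_lineFunctional_neg θ₀ (θ₀ + α), ⟨-z, ?_, ?_⟩, ?_⟩
    · rw [map_neg, hz0]
      linarith
    · rw [map_neg, hz1]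
      linarith
    rintro y ⟨hy0, hy1⟩
    refine ⟨fun hy => absurd hy.1 (not_le.2 hy0), fun hy => ?_⟩
    have := hy.2
    rw [lineFunctional_reflect hx] at this
    linarith

lemma exists_isOpen_reflect_mem_sector (hα : π < α) (h2 : α < 2 * π)
    (hx : lineFunctional θ₀ x = 0 ∨ lineFunctional (θ₀ + α) x = 0) :
    ∃ U : Set (EuclideanSpace ℝ (Fin 2)), IsOpen U ∧ U.Nonempty ∧
      ∀ y ∈ U, y ∈ sector θ₀ α ∧ 2 • x - y ∈ sector θ₀ α := by
  have hsin := Real.sin_neg_of_neg_of_neg_pi_lt (x := α - 2 * π) (by linarith) (by linarith)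
  rw [Real.sin_sub_two_pi] at hsin
  obtain ⟨z, hz0, hz1⟩ := lineFunctional_chord θ₀ α
  rw [sector_eq_union hα.le h2]
  rcases hx with hx | hx
  · refine ⟨_, isOpen_lineFunctional_neg θ₀ (θ₀ + α), ⟨z, hz0 ▸ hsin, hz1 ▸ hsin⟩, ?_⟩
    rintro y ⟨hy0, hy1⟩
    refine ⟨.inr hy1.le, .inl ?_⟩
    rw [lineFunctional_reflect hx]
    linarith
  · refine ⟨_, isOpen_lineFunctional_pos θ₀ (θ₀ + α), ⟨-z, ?_, ?_⟩, ?_⟩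
    · rw [map_neg, hz0]
      linarith
    · rw [map_neg, hz1]
      linarith
    rintro y ⟨hy0, hy1⟩
    refine ⟨.inl hy0.le, .inr ?_⟩
    rw [lineFunctional_reflect hx]
    linarith

end sector

/-- For a planar sector of opening angle `α ∈ (0, 2π)` and a boundary point `x ≠ 0`,
the fractional curvature `H_s(x,C)` is `≤ 0` iff `α ≥ π`, and `= 0` iff `α = π`. -/
theorem fracCurv_sector_sign (s : ℝ) (hs : s ∈ Set.Ioo (0 : ℝ) 1) (θ₀ α : ℝ)
    (hα : α ∈ Set.Ioo 0 (2 * π)) (x : EuclideanSpace ℝ (Fin 2))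
    (hx : x ∈ frontier (sector θ₀ α)) (hx0 : x ≠ 0) (h : ℝ)
    (hpv : fracCurvPV s (sector θ₀ α) x h) :
    (h ≤ 0 ↔ π ≤ α) ∧ (h = 0 ↔ α = π) := by
  obtain ⟨h0, h2⟩ := hα
  have hline := lineFunctional_eq_zero_of_mem_frontier h0 h2 hx
  have hE := (isClosed_sector (θ₀ := θ₀) h0 h2).measurableSet
  rcases lt_trichotomy α π with hlt | heq | hgt
  · obtain ⟨U, hU, hUne, hUE⟩ := exists_isOpen_reflect_notMem_sector h0 hlt hline
    have hpos := hpv.pos hs.1 hE (ae_reflect_notMem_sector h0 hlt.le hline) hU hUne hUE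
    exact ⟨iff_of_false hpos.not_ge hlt.not_ge, iff_of_false hpos.ne' hlt.ne⟩
  · have hzero : h = 0 := le_antisymm
      (hpv.nonpos hs.1 hE (ae_of_all _ fun _ => reflect_mem_sector heq.ge h2 hline))
      (hpv.nonneg hs.1 hE (ae_reflect_notMem_sector h0 heq.le hline))
    exact ⟨iff_of_true hzero.le heq.ge, iff_of_true hzero heq⟩
  · obtain ⟨U, hU, hUne, hUE⟩ := exists_isOpen_reflect_mem_sector hgt h2 hline
    have hneg := hpv.neg hs.1 hE (ae_of_all _ fun _ => reflect_mem_sector hgt.le h2 hline)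
      hU hUne hUE
    exact ⟨iff_of_true hneg.le hgt.le, iff_of_false hneg.ne hgt.ne'⟩
end

section
/- Let C₁, C₂, C₃ be the three sectors of a planar 3-cone with vertex 0 and opening angles α₁, α₂, α₃ ∈ (0,π) summing to 2π, with α₁ ≥ α₂, and let x ∈ ∂C₁ ∩ ∂C₂, x ≠ 0. Write C₁ = C̃₂ ∪ B where C̃₂ is the reflection of C₂ across the line separating C₁ and C₂ and B is a sector of angle α₁ - α₂, and let B̃ ⊆ C₃ be the reflection of B across that line. Then H_s(x, C₁) = ∫_{(C₃ \ B̃) - x} |y|^{-(2+s)} dy and H_s(x, C₂) = ∫_{(C₃ ∪ B) - x} |y|^{-(2+s)} dy, where H_s is the principal-value fractional curvature. -/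
open MeasureTheory Set Filter Topology Real

/-- The closed sector of angles between `a` and `b` with vertex `0`. -/
def Sec (a b : ℝ) : Set (EuclideanSpace ℝ (Fin 2)) :=
  {p | ∃ r θ : ℝ, 0 ≤ r ∧ a ≤ θ ∧ θ ≤ b ∧ p 0 = r * Real.cos θ ∧ p 1 = r * Real.sin θ}

/-- Reflection of the plane across the horizontal axis. -/
noncomputable def axisReflection : EuclideanSpace ℝ (Fin 2) ≃ₗᵢ[ℝ] EuclideanSpace ℝ (Fin 2) :=
  LinearIsometryEquiv.piLpCongrRight 2
    ![LinearIsometryEquiv.refl ℝ ℝ, LinearIsometryEquiv.neg ℝ]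

@[simp] lemma axisReflection_apply_zero (y : EuclideanSpace ℝ (Fin 2)) :
    axisReflection y 0 = y 0 := by
  simp [axisReflection]

@[simp] lemma axisReflection_apply_one (y : EuclideanSpace ℝ (Fin 2)) :
    axisReflection y 1 = -y 1 := by
  simp [axisReflection]

@[simp] lemma axisReflection_axisReflection (y : EuclideanSpace ℝ (Fin 2)) :
    axisReflection (axisReflection y) = y := by
  ext i; fin_cases i <;> simp

lemma axisReflection_eq_self {x : EuclideanSpace ℝ (Fin 2)} (hx : x 1 = 0) :
    axisReflection x = x := by
  ext i; fin_cases i <;> simp [hx]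

lemma dist_axisReflection {x : EuclideanSpace ℝ (Fin 2)} (hx : x 1 = 0)
    (y : EuclideanSpace ℝ (Fin 2)) : dist x (axisReflection y) = dist x y := by
  conv_lhs => rw [← axisReflection_eq_self hx]
  exact axisReflection.dist_map x y

lemma measurableSet_Sec (a b : ℝ) : MeasurableSet (Sec a b) := by
  have h : Sec a b = ⋃ n : ℕ, (fun q : ℝ × ℝ => !₂[q.1 * cos q.2, q.1 * sin q.2]) ''
      (Icc 0 (n : ℝ) ×ˢ Icc a b) := by
    ext p
    simp only [Sec, mem_ofPred_eq, mem_iUnion, mem_image, Prod.exists, mem_prod, mem_Icc]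
    constructor
    · rintro ⟨r, θ, hr, ha, hb, h0, h1⟩
      obtain ⟨n, hn⟩ := exists_nat_ge r
      refine ⟨n, r, θ, ⟨⟨hr, hn⟩, ha, hb⟩, ?_⟩
      ext i; fin_cases i <;> simp [h0, h1]
    · rintro ⟨n, r, θ, ⟨⟨hr, -⟩, ha, hb⟩, rfl⟩
      exact ⟨r, θ, hr, ha, hb, by simp, by simp⟩
  rw [h]
  refine MeasurableSet.iUnion fun n => IsCompact.measurableSet ?_
  refine (isCompact_Icc.prod isCompact_Icc).image ?_
  refine (PiLp.continuous_toLp 2 _).comp (continuous_pi fun i => ?_)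
  fin_cases i <;> simp <;> fun_prop

lemma Sec_mono {a b a' b' : ℝ} (ha : a' ≤ a) (hb : b ≤ b') : Sec a b ⊆ Sec a' b' := by
  rintro p ⟨r, θ, hr, h1, h2, h⟩
  exact ⟨r, θ, hr, ha.trans h1, h2.trans hb, h⟩

lemma mem_Sec_iff_of_polar {a b r φ : ℝ} {p : EuclideanSpace ℝ (Fin 2)} (hr : 0 < r)
    (h0 : p 0 = r * cos φ) (h1 : p 1 = r * sin φ) (ha : φ - a < 2 * π) (hb : b - φ < 2 * π) :
    p ∈ Sec a b ↔ a ≤ φ ∧ φ ≤ b := by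
  refine ⟨?_, fun h => ⟨r, φ, hr.le, h.1, h.2, h0, h1⟩⟩
  rintro ⟨r', θ, hr', haθ, hθb, h0', h1'⟩
  have e0 : r' * cos θ = r * cos φ := h0'.symm.trans h0
  have e1 : r' * sin θ = r * sin φ := h1'.symm.trans h1
  have hsq : r' ^ 2 = r ^ 2 := by
    linear_combination (r' * cos θ + r * cos φ) * e0 + (r' * sin θ + r * sin φ) * e1
      - r' ^ 2 * sin_sq_add_cos_sq θ + r ^ 2 * sin_sq_add_cos_sq φ
  have hrr : r' = r := by
    rwa [sq_eq_sq₀ hr' hr.le] at hsq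
  subst hrr
  have hc : cos θ = cos φ := mul_left_cancel₀ hr.ne' e0
  have hs : sin θ = sin φ := mul_left_cancel₀ hr.ne' e1
  have hcos : cos (θ - φ) = 1 := by
    rw [cos_sub, hc, hs]; linear_combination sin_sq_add_cos_sq φ
  have := (cos_eq_one_iff_of_lt_of_lt (by linarith) (by linarith)).1 hcos
  constructor <;> linarith

lemma exists_polar_of_pos {y : EuclideanSpace ℝ (Fin 2)} (hy : 0 < y 1) :
    ∃ r θ : ℝ, 0 < r ∧ 0 < θ ∧ θ < π ∧ y 0 = r * cos θ ∧ y 1 = r * sin θ := by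
  have hre := Complex.norm_mul_cos_arg ⟨y 0, y 1⟩
  have him := Complex.norm_mul_sin_arg ⟨y 0, y 1⟩
  have hle := Complex.arg_le_pi ⟨y 0, y 1⟩
  have hge : 0 ≤ Complex.arg ⟨y 0, y 1⟩ := Complex.arg_nonneg_iff.2 hy.le
  simp only at hre him
  refine ⟨‖(⟨y 0, y 1⟩ : ℂ)‖, Complex.arg ⟨y 0, y 1⟩, ?_, ?_, ?_, hre.symm, him.symm⟩
  · refine norm_pos_iff.2 fun h => hy.ne' ?_
    simpa using congrArg Complex.im h
  · refine hge.lt_of_ne fun h => ?_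
    rw [← h] at him; simp at him; exact hy.ne him
  · refine hle.lt_of_ne fun h => ?_
    rw [h] at him; simp at him; exact hy.ne him

lemma le_dist_of_mem_Sec {α t : ℝ} (hα : α ∈ Ioo 0 π) (ht : 0 < t)
    {x p : EuclideanSpace ℝ (Fin 2)} (hx0 : x 0 = t) (hx1 : x 1 = 0)
    (hp : p ∈ Sec α (2 * π - α)) : t * sin α ≤ dist x p := by
  obtain ⟨r, θ, hr, h1, h2, hp0, hp1⟩ := hp
  have hcos : cos θ ≤ cos α := by
    rcases le_total θ π with h | h
    · exact cos_le_cos_of_nonneg_of_le_pi hα.1.le h h1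
    · rw [← cos_two_pi_sub θ]
      exact cos_le_cos_of_nonneg_of_le_pi hα.1.le (by linarith) (by linarith)
  rw [EuclideanSpace.dist_eq]
  refine le_sqrt_of_sq_le ?_
  simp only [Fin.sum_univ_two, Real.dist_eq, sq_abs, hx0, hx1, hp0, hp1]
  have h := mul_le_mul_of_nonneg_left hcos (mul_nonneg ht.le hr)
  have hid : (t - r * cos θ) ^ 2 + (0 - r * sin θ) ^ 2 - (t * sin α) ^ 2
      = (r - t * cos α) ^ 2 + 2 * (t * r * cos α - t * r * cos θ) := by
    linear_combination r ^ 2 * sin_sq_add_cos_sq θ - t ^ 2 * sin_sq_add_cos_sq α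
  linarith [sq_nonneg (r - t * cos α)]

lemma ae_linear_ne_zero {a b : ℝ} (hab : a ≠ 0 ∨ b ≠ 0) :
    ∀ᵐ y : EuclideanSpace ℝ (Fin 2), a * y 0 + b * y 1 ≠ 0 := by
  let f : EuclideanSpace ℝ (Fin 2) →ₗ[ℝ] ℝ :=
    a • (EuclideanSpace.proj (𝕜 := ℝ) (0 : Fin 2)).toLinearMap
      + b • (EuclideanSpace.proj (𝕜 := ℝ) (1 : Fin 2)).toLinearMap
  have hf : ∀ y, f y = a * y 0 + b * y 1 := fun y => by simp [f]
  have hker : LinearMap.ker f ≠ ⊤ := by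
    intro h
    have hzero := LinearMap.ker_eq_top.1 h
    have ha := hf !₂[1, 0]
    have hb := hf !₂[0, 1]
    simp [hzero] at ha hb
    exact hab.elim (fun h => h ha.symm) (fun h => h hb.symm)
  have := Measure.addHaar_submodule (volume : Measure (EuclideanSpace ℝ (Fin 2))) _ hker
  rw [ae_iff]
  convert this using 2
  ext y
  simp [hf]

lemma ae_ne_polar_angle {α : ℝ} (hα : α ∈ Ioo 0 π) :
    ∀ᵐ y : EuclideanSpace ℝ (Fin 2), ∀ r θ : ℝ,
      y 0 = r * cos θ → y 1 = r * sin θ → θ ≠ α := by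
  have hs := sin_pos_of_pos_of_lt_pi hα.1 hα.2
  filter_upwards [ae_linear_ne_zero (a := sin α) (b := -cos α) (Or.inl hs.ne')]
    with y hy r θ h0 h1 h
  subst h
  exact hy (by rw [h0, h1]; ring)

lemma integrableOn_dist_rpow_neg_s12 {E : Type*} [NormedAddCommGroup E] [NormedSpace ℝ E]
    [FiniteDimensional ℝ E] [MeasurableSpace E] [BorelSpace E] (μ : Measure E)
    [μ.IsAddHaarMeasure] {q : ℝ} (hq : (Module.finrank ℝ E : ℝ) < q) (x : E) {ε : ℝ}
    (hε : 0 < ε) : IntegrableOn (fun y => dist x y ^ (-q)) {y | ε ≤ dist x y} μ := by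
  have hq0 : 0 < q := (Nat.cast_nonneg _).trans_lt hq
  have hS : MeasurableSet {y | ε ≤ dist x y} :=
    measurableSet_le measurable_const (by fun_prop)
  have hint : Integrable (fun y => (1 + 1 / ε) ^ q * (1 + ‖y - x‖) ^ (-q)) μ :=
    ((integrable_one_add_norm hq).comp_sub_right x).const_mul _
  refine hint.integrableOn.mono'
    ((continuous_const.dist continuous_id).measurable.pow_const _).aestronglyMeasurable ?_
  refine (ae_restrict_iff' hS).2 (ae_of_all _ fun y (hy : ε ≤ dist x y) => ?_)
  have hd : 0 < dist x y := hε.trans_le hy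
  rw [norm_of_nonneg (by positivity), ← dist_eq_norm, dist_comm y x]
  have h1 : 1 + dist x y ≤ (1 + 1 / ε) * dist x y := by
    have : 1 ≤ 1 / ε * dist x y := by
      rw [one_div, inv_mul_eq_div, one_le_div hε]; exact hy
    linarith
  rw [rpow_neg hd.le, rpow_neg (by positivity), ← div_eq_mul_inv, le_div_iff₀ (by positivity),
    inv_mul_le_iff₀ (by positivity), mul_comm, ← mul_rpow (by positivity) hd.le]
  exact rpow_le_rpow (by positivity) h1 hq0.le

/-- If, almost everywhere on the upper half plane, the symmetrization of the signed indicator of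
`E` agrees with the symmetrization of the indicator of a set `D` at positive distance
from the axis point `x`, then the curvature of `E` at `x` is the integral of the kernel over `D`. -/
lemma fracCurvPV_of_symmetrization {s : ℝ} (hs : 0 < s) {E D : Set (EuclideanSpace ℝ (Fin 2))}
    {x : EuclideanSpace ℝ (Fin 2)} (hx : x 1 = 0) (hE : MeasurableSet E) (hD : MeasurableSet D)
    {δ : ℝ} (hδ : 0 < δ) (hDx : ∀ y ∈ D, δ ≤ dist x y)
    (hsymm : ∀ᵐ y : EuclideanSpace ℝ (Fin 2), 0 < y 1 →
      (Eᶜ.indicator (fun _ => (1 : ℝ)) y - E.indicator (fun _ => (1 : ℝ)) y)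
        + (Eᶜ.indicator (fun _ => (1 : ℝ)) (axisReflection y)
          - E.indicator (fun _ => (1 : ℝ)) (axisReflection y))
      = D.indicator (fun _ => (1 : ℝ)) y + D.indicator (fun _ => (1 : ℝ)) (axisReflection y)) :
    fracCurvPV s E x (∫ y in (fun z => z - x) '' D, ‖y‖ ^ (-(2 + s))) := by
  have hR : MeasurePreserving axisReflection (volume : Measure (EuclideanSpace ℝ (Fin 2))) :=
    axisReflection.measurePreserving
  have htrans : ∫ y in (fun z => z - x) '' D, ‖y‖ ^ (-(2 + s))
      = ∫ y in D, dist x y ^ (-(2 + s)) := by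
    rw [(measurePreserving_sub_right volume x).setIntegral_image_emb
      (MeasurableEquiv.subRight x).measurableEmbedding]
    simp only [dist_comm x, dist_eq_norm]
  rw [htrans, fracCurvPV]
  refine tendsto_const_nhds.congr' ?_
  filter_upwards [Ioo_mem_nhdsGT hδ] with ε hε
  set A : Set (EuclideanSpace ℝ (Fin 2)) := {y | ε ≤ dist x y} with hA_def
  have hA : MeasurableSet A := measurableSet_le measurable_const (by fun_prop)
  set g : EuclideanSpace ℝ (Fin 2) → ℝ := fun y =>
    Eᶜ.indicator (fun _ => (1 : ℝ)) y - E.indicator (fun _ => (1 : ℝ)) y with hg_def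
  have hK : IntegrableOn (fun y => dist x y ^ (-(2 + s))) A :=
    integrableOn_dist_rpow_neg_s12 volume (by simp [hs]) x hε.1
  have hg_meas : Measurable g := by
    exact (measurable_const.indicator hE.compl).sub (measurable_const.indicator hE)
  have hgK : IntegrableOn (fun y => g y * dist x y ^ (-(2 + s))) A := by
    refine hK.bdd_mul (c := 1) hg_meas.aestronglyMeasurable (ae_of_all _ fun y => ?_)
    by_cases h : y ∈ E <;> simp [g, h]
  have hDK : IntegrableOn
      (fun y => D.indicator (fun _ => (1 : ℝ)) y * dist x y ^ (-(2 + s))) A := by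
    refine hK.bdd_mul (c := 1) (measurable_const.indicator hD).aestronglyMeasurable
      (ae_of_all _ fun y => ?_)
    by_cases h : y ∈ D <;> simp [h]
  have hDint : ∫ y in A, D.indicator (fun _ => (1 : ℝ)) y * dist x y ^ (-(2 + s))
      = ∫ y in D, dist x y ^ (-(2 + s)) := by
    have hDA : A ∩ D = D := inter_eq_right.2 fun y hy => hε.2.le.trans (hDx y hy)
    rw [← hDA, ← setIntegral_indicator hD, hDA]
    refine integral_congr_ae (ae_of_all _ fun y => ?_)
    by_cases h : y ∈ D <;> simp [h]
  have hne : ∀ᵐ y : EuclideanSpace ℝ (Fin 2), y 1 ≠ 0 := by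
    simpa using ae_linear_ne_zero (a := 0) (b := 1) (Or.inr one_ne_zero)
  let f : EuclideanSpace ℝ (Fin 2) → ℝ := A.indicator fun y =>
    g y * dist x y ^ (-(2 + s)) - D.indicator (fun _ => (1 : ℝ)) y * dist x y ^ (-(2 + s))
  have hodd : ∀ᵐ y, f (axisReflection y) = -f y := by
    filter_upwards [hsymm, hR.quasiMeasurePreserving.ae hsymm, hne] with y h1 h2 h3
    have hid : g y + g (axisReflection y) = D.indicator (fun _ => (1 : ℝ)) y
        + D.indicator (fun _ => (1 : ℝ)) (axisReflection y) := by
      rcases h3.lt_or_gt with h | h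
      · have := h2 (by simpa using h)
        simp only [axisReflection_axisReflection] at this
        simp only [hg_def]
        linarith
      · exact h1 h
    by_cases hy : y ∈ A
    · have hy' : axisReflection y ∈ A := by
        simpa [hA_def, dist_axisReflection hx] using hy
      simp only [f, indicator_of_mem hy, indicator_of_mem hy', dist_axisReflection hx]
      linear_combination (dist x y ^ (-(2 + s))) * hid
    · have hy' : axisReflection y ∉ A := by
        simpa [hA_def, dist_axisReflection hx] using hy
      simp [f, hy, hy']
  have hf : ∫ y, f y = 0 := by
    have h1 : ∫ y, f (axisReflection y) = ∫ y, f y :=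
      hR.integral_comp axisReflection.toHomeomorph.measurableEmbedding f
    rw [integral_congr_ae hodd, integral_neg] at h1
    linarith
  rw [integral_indicator hA, integral_sub hgK hDK, hDint] at hf
  exact (sub_eq_zero.1 hf).symm

/-- Reflection identities for the fractional curvature of a planar 3-cone.
Here `C₁ = Sec 0 α₁`, `C₂ = Sec (-α₂) 0` and `C₃ = Sec α₁ (2π-α₂)`; the half-line
separating `C₁` and `C₂` is the positive horizontal axis, `x = (t,0)` with `t > 0` lies
on it, `B = Sec α₂ α₁` is a sector of angle `α₁ - α₂` with `C₁ = C̃₂ ∪ B`, and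
`B̃ = Sec (2π-α₁) (2π-α₂) ⊆ C₃` is the reflection of `B`. Then
`H_s(x,C₁) = ∫_{(C₃\B̃)-x} |y|^{-(2+s)} dy` and `H_s(x,C₂) = ∫_{(C₃∪B)-x} |y|^{-(2+s)} dy`. -/
theorem fracCurv_threeCone_reflection (s : ℝ) (hs : s ∈ Set.Ioo (0 : ℝ) 1)
    (α₁ α₂ α₃ : ℝ) (h₁ : α₁ ∈ Set.Ioo 0 π) (h₂ : α₂ ∈ Set.Ioo 0 π) (h₃ : α₃ ∈ Set.Ioo 0 π)
    (hsum : α₁ + α₂ + α₃ = 2 * π) (h₂₁ : α₂ ≤ α₁)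
    (x : EuclideanSpace ℝ (Fin 2)) (t : ℝ) (ht : 0 < t) (hx0 : x 0 = t) (hx1 : x 1 = 0) :
    fracCurvPV s (Sec 0 α₁) x
      (∫ y in (fun z => z - x) '' (Sec α₁ (2 * π - α₂) \ Sec (2 * π - α₁) (2 * π - α₂)),
        ‖y‖ ^ (-(2 + s))) ∧
    fracCurvPV s (Sec (-α₂) 0) x
      (∫ y in (fun z => z - x) '' (Sec α₁ (2 * π - α₂) ∪ Sec α₂ α₁),
        ‖y‖ ^ (-(2 + s))) := by
  obtain ⟨h₁0, h₁π⟩ := h₁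
  obtain ⟨h₂0, h₂π⟩ := h₂
  obtain ⟨h₃0, h₃π⟩ := h₃
  have hδ : 0 < t * sin α₂ := mul_pos ht (sin_pos_of_pos_of_lt_pi h₂0 h₂π)
  have hC₃ : Sec α₁ (2 * π - α₂) ⊆ Sec α₂ (2 * π - α₂) := Sec_mono h₂₁ le_rfl
  have hB : Sec α₂ α₁ ⊆ Sec α₂ (2 * π - α₂) := Sec_mono le_rfl (by linarith)
  classical
  constructor
  · refine fracCurvPV_of_symmetrization hs.1 hx1 (measurableSet_Sec _ _)
      ((measurableSet_Sec _ _).diff (measurableSet_Sec _ _)) hδ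
      (fun y hy => le_dist_of_mem_Sec ⟨h₂0, h₂π⟩ ht hx0 hx1 (hC₃ hy.1)) ?_
    filter_upwards [ae_ne_polar_angle ⟨h₁0, h₁π⟩] with y hy hpos
    obtain ⟨r, θ, hr, hθ0, hθπ, e0, e1⟩ := exists_polar_of_pos hpos
    have hne := hy r θ e0 e1
    have e0' : axisReflection y 0 = r * cos (2 * π - θ) := by
      rw [axisReflection_apply_zero, cos_two_pi_sub, e0]
    have e1' : axisReflection y 1 = r * sin (2 * π - θ) := by
      rw [axisReflection_apply_one, sin_two_pi_sub, e1, mul_neg]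
    have m1 := mem_Sec_iff_of_polar (a := 0) (b := α₁) hr e0 e1 (by linarith) (by linarith)
    have m2 := mem_Sec_iff_of_polar (a := 0) (b := α₁) hr e0' e1' (by linarith) (by linarith)
    have m3 := mem_Sec_iff_of_polar (a := α₁) (b := 2 * π - α₂) hr e0 e1
      (by linarith) (by linarith)
    have m4 := mem_Sec_iff_of_polar (a := α₁) (b := 2 * π - α₂) hr e0' e1'
      (by linarith) (by linarith)
    have m5 := mem_Sec_iff_of_polar (a := 2 * π - α₁) (b := 2 * π - α₂) hr e0 e1
      (by linarith) (by linarith)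
    have m6 := mem_Sec_iff_of_polar (a := 2 * π - α₁) (b := 2 * π - α₂) hr e0' e1'
      (by linarith) (by linarith)
    simp only [indicator_apply, mem_compl_iff, Set.mem_sdiff, m1, m2, m3, m4, m5, m6]
    clear hy m1 m2 m3 m4 m5 m6 hB hC₃ hδ
    grind
  · refine fracCurvPV_of_symmetrization hs.1 hx1 (measurableSet_Sec _ _)
      ((measurableSet_Sec _ _).union (measurableSet_Sec _ _)) hδ
      (fun y hy => le_dist_of_mem_Sec ⟨h₂0, h₂π⟩ ht hx0 hx1 (union_subset hC₃ hB hy)) ?_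
    filter_upwards [ae_ne_polar_angle ⟨h₂0, h₂π⟩] with y hy hpos
    obtain ⟨r, θ, hr, hθ0, hθπ, e0, e1⟩ := exists_polar_of_pos hpos
    have hne := hy r θ e0 e1
    have e0' : axisReflection y 0 = r * cos (-θ) := by
      rw [axisReflection_apply_zero, cos_neg, e0]
    have e1' : axisReflection y 1 = r * sin (-θ) := by
      rw [axisReflection_apply_one, sin_neg, e1, mul_neg]
    have e0'' : axisReflection y 0 = r * cos (2 * π - θ) := by
      rw [axisReflection_apply_zero, cos_two_pi_sub, e0]
    have e1'' : axisReflection y 1 = r * sin (2 * π - θ) := by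
      rw [axisReflection_apply_one, sin_two_pi_sub, e1, mul_neg]
    have m1 := mem_Sec_iff_of_polar (a := -α₂) (b := 0) hr e0 e1 (by linarith) (by linarith)
    have m2 := mem_Sec_iff_of_polar (a := -α₂) (b := 0) hr e0' e1' (by linarith) (by linarith)
    have m3 := mem_Sec_iff_of_polar (a := α₁) (b := 2 * π - α₂) hr e0 e1
      (by linarith) (by linarith)
    have m4 := mem_Sec_iff_of_polar (a := α₁) (b := 2 * π - α₂) hr e0'' e1''
      (by linarith) (by linarith)
    have m5 := mem_Sec_iff_of_polar (a := α₂) (b := α₁) hr e0 e1 (by linarith) (by linarith)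
    have m6 := mem_Sec_iff_of_polar (a := α₂) (b := α₁) hr e0'' e1''
      (by linarith) (by linarith)
    simp only [indicator_apply, mem_compl_iff, mem_union, m1, m2, m3, m4, m5, m6]
    clear hy m1 m2 m3 m4 m5 m6 hB hC₃ hδ
    grind
end
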